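/- For every natural number d ≥ 1, the sequence p_n = Σ_{k=0}^{n-1} C(n-1,k)(-1)^k Π_{j=0}^{k-1}(1 - (j+2)^{-d}) satisfies p_n ~ 1/(d n) as n → ∞, i.e., n·d·p_n → 1. -/

import Mathlib

open Filter

/-- Alternating binomial transform, defined by the difference recursion. -/
noncomputable def altT : (ℕ → ℝ) → ℕ → ℝ
  | c, 0 => c 0
  | c, (m + 1) => altT c m - altT (fun k => c (k + 1)) m

lemma altT_sub (m : ℕ) : ∀ b c : ℕ → ℝ,
    altT (fun k => b k - c k) m = altT b m - altT c m := by
  induction m with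
  | zero => intro b c; simp [altT]
  | succ m ih => intro b c; simp only [altT]; rw [ih, ih (fun k => b (k+1))]; ring

lemma altT_eq_sum (m : ℕ) : ∀ c : ℕ → ℝ,
    altT c m = ∑ k ∈ Finset.range (m + 1), (m.choose k : ℝ) * (-1) ^ k * c k := by
  induction m with
  | zero => intro c; simp [altT]
  | succ m ih =>
    intro c
    simp only [altT]
    rw [ih, ih, Finset.sum_range_succ' _ (m + 1)]
    simp only [Nat.choose_succ_succ, Nat.cast_add, add_mul, Finset.sum_add_distrib]
    have h : ∑ k ∈ Finset.range (m + 1), (m.choose k : ℝ) * (-1) ^ k * c k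
        = ∑ k ∈ Finset.range (m + 1), (m.choose (k + 1) : ℝ) * (-1) ^ (k + 1) * c (k + 1)
          + c 0 := by
      have := Finset.sum_range_succ (fun k => (m.choose k : ℝ) * (-1) ^ k * c k) (m + 1)
      rw [Finset.sum_range_succ'] at this
      simp at this
      linarith
    rw [h]
    have h2 : ∑ k ∈ Finset.range (m + 1), (m.choose k : ℝ) * (-1) ^ (k + 1) * c (k + 1)
        = - ∑ k ∈ Finset.range (m + 1), (m.choose k : ℝ) * (-1) ^ k * c (k + 1) := by
      rw [← Finset.sum_neg_distrib]
      exact Finset.sum_congr rfl (fun k _ => by ring)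
    rw [h2]
    simp
    ring

lemma altT_mul (m : ℕ) : ∀ (c : ℕ → ℝ) (s : ℝ),
    altT (fun k => ((k : ℝ) + s) * c k) (m + 1)
      = (m + 1 + s) * altT c (m + 1) - (m + 1) * altT c m := by
  induction m with
  | zero => intro c s; simp [altT]; ring
  | succ m ih =>
    intro c s
    rw [altT, ih]
    have h := ih (fun k => c (k + 1)) (s + 1)
    have h1 : (fun k : ℕ => ((k + 1 : ℕ) : ℝ) * c (k + 1) + s * c (k + 1))
      = (fun k : ℕ => ((k : ℝ) + (s + 1)) * c (k + 1)) := by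
      funext k; push_cast; ring
    have h2 : (fun k : ℕ => (((k + 1 : ℕ) : ℝ) + s) * c (k + 1))
      = (fun k : ℕ => ((k : ℝ) + (s + 1)) * c (k + 1)) := by
      funext k; push_cast; ring
    rw [h2, h]
    have e1 : altT c (m + 1) = altT c m - altT (fun k => c (k + 1)) m := rfl
    have e2 : altT c (m + 1 + 1) = altT c (m + 1) - altT (fun k => c (k + 1)) (m + 1) := rfl
    have e3 : altT (fun k => c (k + 1)) m = altT c m - altT c (m + 1) := by linarith
    have e4 : altT (fun k => c (k + 1)) (m + 1) = altT c (m + 1) - altT c (m + 1 + 1) := by linarith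
    rw [e3, e4]
    push_cast
    ring

/-- A nonautonomous cyclic averaging system converges to consensus. -/
lemma cyclic_consensus (d : ℕ) (hd : 1 ≤ d) (R : ℕ → ℕ → ℝ)
    (h0 : ∀ j, R j 0 = (1 / 2) ^ j)
    (h1 : ∀ j m : ℕ, ((m : ℝ) + 3) * R (j + 1) (m + 1) - (m + 2) * R (j + 1) m = R j (m + 1))
    (h2 : ∀ m : ℕ, ((m : ℝ) + 1) * R 0 (m + 1) = (m + 2) * R d m) :
    Tendsto (R 0) atTop (nhds (1 / d)) := by
  have hdpos : (0 : ℝ) < d := by exact_mod_cast hd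
  -- bounds
  have hb : ∀ m : ℕ, ∀ j, 0 ≤ R j m ∧ R j m ≤ 1 ∧ ((m : ℝ) + 2) * R (j + 1) m ≤ m + 1 := by
    intro m
    induction m with
    | zero =>
      intro j
      rw [h0, h0]
      have : (1 / 2 : ℝ) ^ j ≤ 1 := pow_le_one₀ (by norm_num) (by norm_num)
      refine ⟨by positivity, this, ?_⟩
      rw [pow_succ]; push_cast; linarith
    | succ m ih =>
      have hm : (0 : ℝ) ≤ m := Nat.cast_nonneg m
      have step : ∀ j, 0 ≤ R j (m + 1) → R j (m + 1) ≤ 1 →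
          0 ≤ R (j + 1) (m + 1) ∧ ((m : ℝ) + 3) * R (j + 1) (m + 1) ≤ m + 2 := by
        intro j a b
        have := h1 j m
        have i1 := (ih (j + 1)).1
        have i2 := (ih j).2.2
        have : 0 ≤ ((m : ℝ) + 2) * R (j + 1) m := by positivity
        constructor
        · have : 0 ≤ ((m : ℝ) + 3) * R (j + 1) (m + 1) := by linarith
          exact nonneg_of_mul_nonneg_right this (by positivity)
        · linarith
      have base : ∀ j, 0 ≤ R j (m + 1) ∧ R j (m + 1) ≤ 1 := by
        intro j
        induction j with
        | zero =>
          have e := h2 m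
          have i1 := (ih d).1
          have i2 := (ih (d - 1)).2.2
          rw [Nat.sub_add_cancel hd] at i2
          constructor
          · have : 0 ≤ ((m : ℝ) + 1) * R 0 (m + 1) := by rw [e]; positivity
            exact nonneg_of_mul_nonneg_right this (by positivity)
          · nlinarith
        | succ j ihj =>
          obtain ⟨a, b⟩ := step j ihj.1 ihj.2
          exact ⟨a, by nlinarith⟩
      intro j
      obtain ⟨a, b⟩ := base j
      refine ⟨a, b, ?_⟩
      have := (step j a b).2
      push_cast
      linarith
  have hn : ∀ j m, 0 ≤ R j m := fun j m => (hb m j).1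
  have hl : ∀ j m, R j m ≤ 1 := fun j m => (hb m j).2.1
  set S : ℕ → ℝ := fun m => ∑ j ∈ Finset.range d, R (j + 1) m with hS
  set V : ℕ → ℝ := fun m => ∑ j ∈ Finset.range d, R (j + 1) m ^ 2 with hV
  set D : ℕ → ℝ := fun m => ∑ j ∈ Finset.range d, (R j m - R (j + 1) m) ^ 2 with hD
  -- relation in difference form
  have hdiff : ∀ j m : ℕ, R (j + 1) (m + 1) - R (j + 1) m
      = (R j (m + 1) - R (j + 1) (m + 1)) / (m + 2) := by
    intro j m
    have hm : (0 : ℝ) ≤ m := Nat.cast_nonneg m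
    have := h1 j m
    field_simp
    linarith
  have hR0 : ∀ m : ℕ, R 0 (m + 1) = R d m + R d m / (m + 1) := by
    intro m
    have hm : (0 : ℝ) ≤ m := Nat.cast_nonneg m
    have := h2 m
    field_simp
    linarith
  -- conservation
  have hcons : ∀ m : ℕ, S m + R d m / (m + 1) = 1 := by
    intro m
    induction m with
    | zero =>
      simp only [hS, h0]
      have : ∀ e : ℕ, ∑ j ∈ Finset.range e, (1 / 2 : ℝ) ^ (j + 1) + (1 / 2) ^ e = 1 := by
        intro e
        induction e with
        | zero => simp
        | succ e ih => 
          rw [Finset.sum_range_succ]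
          have t : (1 / 2 : ℝ) ^ (e + 1) + (1 / 2) ^ (e + 1) = (1 / 2) ^ e := by ring
          linarith
      simpa using this d
    | succ m ih =>
      have hm : (0 : ℝ) ≤ m := Nat.cast_nonneg m
      have e : S (m + 1) - S m = (R 0 (m + 1) - R d (m + 1)) / (m + 2) := by
        simp only [hS]
        rw [← Finset.sum_sub_distrib, Finset.sum_congr rfl (fun j _ => hdiff j m),
          ← Finset.sum_div, Finset.sum_range_sub' (fun j => R j (m + 1))]
      have e2 := hR0 m
      have e3 : R 0 (m + 1) / (m + 2) = R d m / (m + 1) := by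
        rw [e2]; field_simp; ring
      rw [sub_div] at e
      have e4 : R d (m + 1) / (((m + 1 : ℕ) : ℝ) + 1) = R d (m + 1) / (m + 2) := by
        congr 1; push_cast; ring
      rw [e4]
      linarith
  have hS1 : ∀ m, S m ≤ 1 := by
    intro m
    have := hcons m
    have : 0 ≤ R d m / (m + 1) := div_nonneg (hn _ _) (by positivity)
    linarith
  have hS0 : ∀ m, 0 ≤ S m := fun m => Finset.sum_nonneg (fun j _ => hn _ _)
  -- energy
  have hE : ∀ m : ℕ, V (m + 1) - V m ≤
      (R 0 (m + 1) ^ 2 - R d (m + 1) ^ 2 - D (m + 1)) / (m + 2) := by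
    intro m
    have hm : (0 : ℝ) ≤ m := Nat.cast_nonneg m
    have e : (R 0 (m + 1) ^ 2 - R d (m + 1) ^ 2 - D (m + 1)) / ((m : ℝ) + 2)
       = ∑ j ∈ Finset.range d, ((R j (m + 1) ^ 2 - R (j + 1) (m + 1) ^ 2)
          - (R j (m + 1) - R (j + 1) (m + 1)) ^ 2) / ((m : ℝ) + 2) := by
      rw [← Finset.sum_div, Finset.sum_sub_distrib,
        Finset.sum_range_sub' (fun j => R j (m + 1) ^ 2)]
    rw [e]
    simp only [hV]
    rw [← Finset.sum_sub_distrib]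
    refine Finset.sum_le_sum (fun j _ => ?_)
    have h := hdiff j m
    have e2 : ((R j (m + 1) ^ 2 - R (j + 1) (m + 1) ^ 2)
          - (R j (m + 1) - R (j + 1) (m + 1)) ^ 2) / ((m : ℝ) + 2)
        = 2 * R (j + 1) (m + 1) * (R (j + 1) (m + 1) - R (j + 1) m) := by
      rw [h]; ring
    rw [e2]
    nlinarith [sq_nonneg (R (j + 1) (m + 1) - R (j + 1) m)]
  have hE2 : ∀ m : ℕ, V (m + 1) + 4 / ((m : ℝ) + 2) ≤
      V m + 4 / ((m : ℝ) + 1) - D (m + 1) / (m + 2) := by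
    intro m
    have hm : (0 : ℝ) ≤ m := Nat.cast_nonneg m
    have a1 : R 0 (m + 1) - R d (m + 1) ≤ 2 / ((m : ℝ) + 1) := by
      have b1 := hR0 m
      have b2 := hdiff (d - 1) m
      rw [Nat.sub_add_cancel hd] at b2
      have b3 : R d m / ((m : ℝ) + 1) ≤ 1 / (m + 1) := by gcongr; exact hl _ _
      have b4 : (R d (m + 1) - R (d - 1) (m + 1)) / ((m : ℝ) + 2) ≤ 1 / (m + 1) := by
        have := hl d (m + 1)
        have := hn (d - 1) (m + 1)
        calc _ ≤ 1 / ((m : ℝ) + 2) := by gcongr; linarith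
          _ ≤ _ := by gcongr; norm_num
      have b5 : (2 : ℝ) / (m + 1) = 1 / (m + 1) + 1 / (m + 1) := by ring
      have b6 : (R d (m + 1) - R (d - 1) (m + 1)) / ((m : ℝ) + 2)
        = - ((R (d - 1) (m + 1) - R d (m + 1)) / ((m : ℝ) + 2)) := by ring
      linarith
    have a2 : R 0 (m + 1) ^ 2 - R d (m + 1) ^ 2 ≤ 4 / ((m : ℝ) + 1) := by
      have c1 : 0 ≤ R 0 (m + 1) + R d (m + 1) := add_nonneg (hn _ _) (hn _ _)
      have c2 : R 0 (m + 1) + R d (m + 1) ≤ 2 := by linarith [hl 0 (m + 1), hl d (m + 1)]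
      have c3 : (4 : ℝ) / (m + 1) = 2 * (2 / (m + 1)) := by ring
      have c4 : (0 : ℝ) ≤ 2 / (m + 1) := by positivity
      rw [c3]
      calc _ = (R 0 (m + 1) + R d (m + 1)) * (R 0 (m + 1) - R d (m + 1)) := by ring
        _ ≤ (R 0 (m + 1) + R d (m + 1)) * (2 / (m + 1)) := by gcongr
        _ ≤ _ := by gcongr
    have a3 := hE m
    have a4 : (R 0 (m + 1) ^ 2 - R d (m + 1) ^ 2 - D (m + 1)) / ((m : ℝ) + 2)
       ≤ (4 / ((m : ℝ) + 1) - D (m + 1)) / (m + 2) := by gcongr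
    have a5 : (4 / ((m : ℝ) + 1) - D (m + 1)) / (m + 2)
       = 4 / (m + 1) - 4 / (m + 2) - D (m + 1) / (m + 2) := by
      field_simp; ring
    linarith
  -- Poincare
  have hP : ∀ m, V m - 1 / d ≤ d ^ 2 * D m := by
    intro m
    have p1 : ∀ j ∈ Finset.range d, (R (j + 1) m - R d m) ^ 2 ≤ d * D m := by
      intro j hj
      have hj' : j + 1 ≤ d := Finset.mem_range.mp hj
      have e : R (j + 1) m - R d m = ∑ i ∈ Finset.Ico (j + 1) d, (R i m - R (i + 1) m) := by
        have := Finset.sum_Ico_sub (fun i => R i m) hj'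
        have t : ∑ i ∈ Finset.Ico (j + 1) d, (R i m - R (i + 1) m)
          = - ∑ i ∈ Finset.Ico (j + 1) d, (R (i + 1) m - R i m) := by
          rw [← Finset.sum_neg_distrib]; exact Finset.sum_congr rfl (fun i _ => by ring)
        rw [t, this]; ring
      rw [e]
      refine (sq_sum_le_card_mul_sum_sq).trans ?_
      have hsub : Finset.Ico (j + 1) d ⊆ Finset.range d := by
        intro i hi; simp at hi ⊢; omega
      have c1 : ∑ i ∈ Finset.Ico (j + 1) d, (R i m - R (i + 1) m) ^ 2 ≤ D m :=
        Finset.sum_le_sum_of_subset_of_nonneg hsub (fun i _ _ => sq_nonneg _)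
      have c2 : ((Finset.Ico (j + 1) d).card : ℝ) ≤ d := by
        have := Finset.card_le_card hsub
        rw [Finset.card_range] at this
        exact_mod_cast this
      have c3 : 0 ≤ ∑ i ∈ Finset.Ico (j + 1) d, (R i m - R (i + 1) m) ^ 2 :=
        Finset.sum_nonneg (fun i _ => sq_nonneg _)
      exact mul_le_mul c2 c1 c3 hdpos.le
    have p2 := Finset.sum_le_sum p1
    simp only [Finset.sum_const, Finset.card_range, nsmul_eq_mul] at p2
    have p3 : ∑ j ∈ Finset.range d, (R (j + 1) m - R d m) ^ 2
        = V m - 2 * R d m * S m + d * R d m ^ 2 := by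
      simp only [hV, hS, Finset.mul_sum]
      rw [← Finset.sum_sub_distrib]
      have : (d : ℝ) * R d m ^ 2 = ∑ j ∈ Finset.range d, R d m ^ 2 := by simp
      rw [this, ← Finset.sum_add_distrib]
      exact Finset.sum_congr rfl (fun j _ => by ring)
    have p4 : 2 * R d m * S m - d * R d m ^ 2 ≤ 1 / d := by
      rw [le_div_iff₀ hdpos]
      nlinarith [sq_nonneg (d * R d m - S m), hS0 m, hS1 m]
    rw [p3] at p2
    nlinarith
  have hVar : ∀ m, (R d m - S m / d) ^ 2 ≤ V m - S m ^ 2 / d := by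
    intro m
    have p3 : ∑ j ∈ Finset.range d, (R (j + 1) m - S m / d) ^ 2
        = V m - S m ^ 2 / d := by
      have : ∑ j ∈ Finset.range d, (R (j + 1) m - S m / d) ^ 2
          = V m - 2 * (S m / d) * S m + ∑ j ∈ Finset.range d, (S m / d) ^ 2 := by
        have e : 2 * (S m / d) * S m = ∑ j ∈ Finset.range d, 2 * (S m / d) * R (j + 1) m := by
          rw [← Finset.mul_sum]
        rw [e]
        simp only [hV]
        rw [← Finset.sum_sub_distrib, ← Finset.sum_add_distrib]
        exact Finset.sum_congr rfl (fun j _ => by ring)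
      rw [this]
      simp only [Finset.sum_const, Finset.card_range, nsmul_eq_mul]
      field_simp
      ring
    rw [← p3]
    have := Finset.single_le_sum (f := fun j => (R (j + 1) m - S m / d) ^ 2)
      (fun j _ => sq_nonneg _) (Finset.mem_range.mpr (Nat.sub_lt hd one_pos))
    simp only [Nat.sub_add_cancel hd] at this
    exact this
  -- limit of the energy
  set F : ℕ → ℝ := fun m => V m - 1 / d + 4 / ((m : ℝ) + 1) with hF
  have hFstep : ∀ m : ℕ, F (m + 1) ≤ F m - D (m + 1) / (m + 2) := by
    intro m
    have := hE2 m
    have e : (4 : ℝ) / (((m + 1 : ℕ) : ℝ) + 1) = 4 / ((m : ℝ) + 2) := by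
      congr 1; push_cast; ring
    simp only [hF]
    rw [e]
    linarith
  have hD0 : ∀ m, 0 ≤ D m := fun m => Finset.sum_nonneg (fun i _ => sq_nonneg _)
  have hanti : Antitone F := antitone_nat_of_succ_le (fun m => by
    have := hFstep m
    have : 0 ≤ D (m + 1) / ((m : ℝ) + 2) := div_nonneg (hD0 _) (by positivity)
    linarith)
  have hV0 : ∀ m, 0 ≤ V m := fun m => Finset.sum_nonneg (fun i _ => sq_nonneg _)
  have hFlb : ∀ m, - (1 / (d : ℝ)) ≤ F m := by
    intro m
    have := hV0 m
    have : (0 : ℝ) ≤ 4 / ((m : ℝ) + 1) := by positivity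
    simp only [hF]; linarith
  obtain ⟨L, hL⟩ : ∃ L, Tendsto F atTop (nhds L) :=
    ⟨_, tendsto_atTop_ciInf hanti ⟨- (1 / (d : ℝ)), by rintro _ ⟨m, rfl⟩; exact hFlb m⟩⟩
  have hLle : ∀ m, L ≤ F m := fun m => hanti.le_of_tendsto hL m
  have hinv : Tendsto (fun m : ℕ => 1 / ((m : ℝ) + 1)) atTop (nhds 0) :=
    tendsto_one_div_add_atTop_nhds_zero_nat
  have h4 : Tendsto (fun m : ℕ => 4 / ((m : ℝ) + 1)) atTop (nhds 0) := by
    have := hinv.const_mul 4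
    simpa [div_eq_mul_inv] using this
  have hL0 : L ≤ 0 := by
    by_contra hpos
    push Not at hpos
    obtain ⟨N, hN⟩ := eventually_atTop.mp (h4.eventually (gt_mem_nhds (half_pos hpos)))
    set c : ℝ := L / 2 / d ^ 2 with hc
    have hcpos : 0 < c := by positivity
    have hst : ∀ m, N ≤ m → F (m + 1) ≤ F m - c * (1 / ((m : ℝ) + 2)) := by
      intro m hm
      have q1 := hN (m + 1) (by omega)
      have q2 := hLle (m + 1)
      have q3 := hP (m + 1)
      have q4 : c ≤ D (m + 1) := by
        rw [hc, div_le_iff₀ (by positivity)]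
        simp only [hF] at q2
        linarith
      have q5 : c * (1 / ((m : ℝ) + 2)) ≤ D (m + 1) / (m + 2) := by
        rw [mul_one_div]; gcongr
      linarith [hFstep m]
    have htel : ∀ k, F (N + k) + c * ∑ i ∈ Finset.range k, (1 / (((N + i : ℕ) : ℝ) + 2)) ≤ F N := by
      intro k
      induction k with
      | zero => simp
      | succ k ih =>
        rw [Finset.sum_range_succ, mul_add]
        have := hst (N + k) (by omega)
        rw [← add_assoc N k 1]
        linarith
    have hns : ¬ Summable (fun i : ℕ => 1 / (((N + i : ℕ) : ℝ) + 2)) := by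
      intro hs
      have : Summable (fun i : ℕ => 1 / ((i + (N + 2) : ℕ) : ℝ)) := by
        refine hs.congr (fun i => ?_)
        push_cast; congr 1; ring
      exact Real.not_summable_one_div_natCast
        ((summable_nat_add_iff (f := fun i : ℕ => 1 / (i : ℝ)) (N + 2)).mp this)
    apply hns
    refine summable_of_sum_range_le (c := F N / c) (fun i => by positivity) (fun k => ?_)
    rw [le_div_iff₀ hcpos]
    have := htel k
    have := hLle (N + k)
    linarith
  -- conclude
  have hsm : Tendsto (fun m : ℕ => R d m / ((m : ℝ) + 1)) atTop (nhds 0) := by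
    refine squeeze_zero (fun m => div_nonneg (hn _ _) (by positivity)) (fun m => ?_) hinv
    gcongr
    exact hl _ _
  have hSlim : Tendsto S atTop (nhds 1) := by
    have e : S = fun m : ℕ => 1 - R d m / ((m : ℝ) + 1) := by
      funext m; linarith [hcons m]
    rw [e]
    simpa using hsm.const_sub 1
  have hG : Tendsto (fun m => V m - S m ^ 2 / d) atTop (nhds L) := by
    have e : (fun m => V m - S m ^ 2 / d)
        = fun m : ℕ => F m - 4 / ((m : ℝ) + 1) + 1 / d - S m ^ 2 / d := by
      funext m; simp only [hF]; ring
    rw [e]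
    have := ((hL.sub h4).add_const (1 / (d : ℝ))).sub ((hSlim.pow 2).div_const (d : ℝ))
    simpa using this
  have hLeq : L = 0 := by
    refine le_antisymm hL0 (ge_of_tendsto' hG (fun m => ?_))
    exact (sq_nonneg _).trans (hVar m)
  rw [hLeq] at hG
  have hsq : Tendsto (fun m => (R d m - S m / d) ^ 2) atTop (nhds 0) :=
    squeeze_zero (fun m => sq_nonneg _) hVar hG
  have habs : Tendsto (fun m => R d m - S m / d) atTop (nhds 0) := by
    have := hsq.sqrt
    simp only [Real.sqrt_sq_eq_abs, Real.sqrt_zero] at this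
    exact (tendsto_zero_iff_abs_tendsto_zero _).mpr this
  have hRd : Tendsto (fun m => R d m) atTop (nhds (1 / d)) := by
    have := habs.add (hSlim.div_const (d : ℝ))
    simpa using this
  rw [← tendsto_add_atTop_iff_nat 1]
  have := hRd.add hsm
  rw [add_zero] at this
  exact this.congr (fun m => (hR0 m).symm)

/-- For every `d ≥ 1`, the chain-record probabilities
`p_n = Σ_{k=0}^{n-1} C(n-1,k)(-1)^k Π_{j<k}(1 - (j+2)^{-d})` satisfy `p_n ~ 1/(dn)`,
i.e. `n·d·p_n → 1` as `n → ∞`. -/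
theorem chain_record_prob_asymptotics (d : ℕ) (hd : 1 ≤ d) :
    Tendsto (fun n : ℕ =>
        (n : ℝ) * d * ∑ k ∈ Finset.range n, ((n - 1).choose k : ℝ) * (-1) ^ k *
            ∏ j ∈ Finset.range k, (1 - 1 / ((j : ℝ) + 2) ^ d))
      atTop (nhds 1) := by
  have hdpos : (0 : ℝ) < d := by exact_mod_cast hd
  set a : ℕ → ℝ := fun k => ∏ j ∈ Finset.range k, (1 - 1 / ((j : ℝ) + 2) ^ d) with ha
  have key := cyclic_consensus d hd
    (fun j m => ((m : ℝ) + 1) * altT (fun k => a k / ((k : ℝ) + 2) ^ j) m)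
    (by intro j; simp [altT, ha])
    (by
      intro j m
      have h := altT_mul m (fun k => a k / ((k : ℝ) + 2) ^ (j + 1)) 2
      have e : (fun k : ℕ => ((k : ℝ) + 2) * (a k / ((k : ℝ) + 2) ^ (j + 1)))
          = fun k : ℕ => a k / ((k : ℝ) + 2) ^ j := by
        funext k
        have : (k : ℝ) + 2 ≠ 0 := by positivity
        field_simp
        ring
      rw [e] at h
      simp only [h]
      push_cast
      ring)
    (by
      intro m
      have e : altT a (m + 1) = altT (fun k => a k / ((k : ℝ) + 2) ^ d) m := by
        rw [altT, ← altT_sub]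
        congr 1
        funext k
        simp only [ha]
        rw [Finset.prod_range_succ]
        ring
      simp only [pow_zero, div_one]
      rw [← e]
      push_cast
      ring)
  rw [← tendsto_add_atTop_iff_nat 1]
  have k2 := key.const_mul (d : ℝ)
  rw [mul_one_div_cancel hdpos.ne'] at k2
  refine k2.congr (fun m => ?_)
  simp only [pow_zero, div_one, Nat.add_sub_cancel]
  rw [altT_eq_sum]
  push_cast
  ring
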